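/- Let k ≥ 1 and let P, P' be database properties. Suppose that for every x = (x_1,…,x_k) ∈ X^k with pairwise distinct entries and every D ∈ DB there are sets S_1^{x,D}, …, S_k^{x,D} ⊆ Ȳ, each satisfying (⊥ ∈ S_i^{x,D} implies S_i^{x,D} = Ȳ), such that for all r ∈ Ȳ^k: (i) if D[x↦r] ∈ P' then r_i ∈ S_i^{x,D} for some i, and (ii) if r_i ∈ S_i^{x,D} for some i then D[x↦r] ∈ P. Then ⟦¬P → P'⟧_k ≤ max over all such x and D of √(10 · Σ_{i=1}^{k} ρ_i^{x,D}), where ρ_i^{x,D} := |S_i^{x,D} ∩ Y|/M if S_i^{x,D} is neither empty nor all of Ȳ, and ρ_i^{x,D} := 0 otherwise. -/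

import Mathlib

noncomputable section

/- `Ȳ = Y ∪ {⊥}` is modeled by `Option Y` (`⊥ = none`), databases by `X → Option Y`,
and `ℂ[DB]` by `EuclideanSpace ℂ (X → Option Y)`. -/

/-- matrix (in the computational basis) of the single-register unitary `Comp` -/
def compMat (Y : Type*) [Fintype Y] [DecidableEq Y] :
    Matrix (Option Y) (Option Y) ℂ :=
  Matrix.of fun u v =>
    match u, v with
    | none, none => 0
    | some _, none => ((Real.sqrt (Fintype.card Y) : ℝ) : ℂ)⁻¹
    | none, some _ => ((Real.sqrt (Fintype.card Y) : ℝ) : ℂ)⁻¹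
    | some a, some b => (if a = b then (1 : ℂ) else 0) - ((Fintype.card Y : ℕ) : ℂ)⁻¹

/-- matrix of the diagonal unitary `O_ŷ` associated to a character `ŷ` of `Y` -/
def oMat {Y : Type*} [Fintype Y] [DecidableEq Y] [AddCommGroup Y] (c : AddChar Y ℂ) :
    Matrix (Option Y) (Option Y) ℂ :=
  Matrix.diagonal fun u => Option.elim u 1 fun r => c r

/-- matrix of the single-register compressed oracle `cO_ŷ = Comp ∘ O_ŷ ∘ Comp` -/
def cOMat {Y : Type*} [Fintype Y] [DecidableEq Y] [AddCommGroup Y] (c : AddChar Y ℂ) :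
    Matrix (Option Y) (Option Y) ℂ :=
  compMat Y * oMat c * compMat Y

/-- a single-register operator (given by its matrix `m`) acting at register `x0` -/
def liftMat {X Y : Type*} [Fintype X] [DecidableEq X] [DecidableEq Y] (x0 : X)
    (m : Matrix (Option Y) (Option Y) ℂ) :
    Matrix (X → Option Y) (X → Option Y) ℂ :=
  Matrix.of fun D' D => if ∀ a, a ≠ x0 → D' a = D a then m (D' x0) (D x0) else 0

/-- matrix of `cO_{x,ŷ}`: the composition of `cO_{ŷ i}` acting at register `x i` -/
def cOparMat {X Y : Type*} [Fintype X] [DecidableEq X] [Fintype Y] [DecidableEq Y]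
    [AddCommGroup Y] {k : ℕ} (x : Fin k → X) (c : Fin k → AddChar Y ℂ) :
    Matrix (X → Option Y) (X → Option Y) ℂ :=
  (List.ofFn fun i : Fin k => liftMat (x i) (cOMat (c i))).prod

/-- matrix of the orthogonal projection onto `span{e_D : D ∈ P}` -/
def projMat {ι : Type*} [DecidableEq ι] (P : Set ι) : Matrix ι ι ℂ := by
  classical exact Matrix.of fun i j => if i = j ∧ i ∈ P then 1 else 0

/-- the (continuous linear) operator on `ℓ²` given by a matrix -/
def toOp {ι : Type*} [Fintype ι] [DecidableEq ι] (m : Matrix ι ι ℂ) :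
    EuclideanSpace ℂ ι →L[ℂ] EuclideanSpace ℂ ι :=
  LinearMap.toContinuousLinearMap (Matrix.toEuclideanLin m)

/-- `D|^x`: the set of databases that coincide with `D` outside of `x` -/
def agreeOff {X Y : Type*} {k : ℕ} (D : X → Option Y) (x : Fin k → X) :
    Set (X → Option Y) :=
  {D' | ∀ a : X, (∀ i, x i ≠ a) → D' a = D a}

/-- The quantum transition capacity `⟦P → P' | X₀⟧_k`: the supremum, over all `x ∈ X₀^k`
with pairwise distinct entries, all `k`-tuples `ŷ` of characters of `Y` and all databases `D`,
of `‖P'|_{D|^x} ∘ cO_{x,ŷ} ∘ P|_{D|^x}‖` (`0` if the range is empty). -/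
def qtc {X Y : Type*} [Fintype X] [DecidableEq X] [Fintype Y] [DecidableEq Y]
    [AddCommGroup Y] (P P' : Set (X → Option Y)) (k : ℕ) (X₀ : Set X) : ℝ :=
  sSup {v : ℝ | ∃ (x : Fin k → X) (c : Fin k → AddChar Y ℂ) (D : X → Option Y),
    Function.Injective x ∧ (∀ i, x i ∈ X₀) ∧
    v = ‖(toOp (projMat (P' ∩ agreeOff D x))).comp
          ((toOp (cOparMat x c)).comp (toOp (projMat (P ∩ agreeOff D x))))‖}

end

/- `D[x↦r]`: the database redefined at the pairwise distinct points `x i` by values `r i` -/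
open Classical in
noncomputable def dbUpdate {X Y : Type*} {k : ℕ} (D : X → Option Y)
    (x : Fin k → X) (r : Fin k → Option Y) : X → Option Y :=
  fun a => if h : ∃ i, x i = a then r h.choose else D a

/-!
A unitary acting at registers other than `x i` neither disturbs a property of register `x i` nor
changes norms, so the part of `cO_{x,ŷ}` that leads from outside to inside of such a property `S`
has the norm of the single-register corner `S ∘ cO_{ŷ_i} ∘ Sᶜ`. Since the orthogonal projection onto
a union is dominated by the sum of the projections, the squared norms of the `k` corners add up.

For one register, `Comp` is the reflection `1 - w wᵀ` in the vector `w = e_⊥ - M^(-1/2) ∑ y, e_y`.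
For a nontrivial character the off-diagonal entries of `cO_ŷ` are therefore
`w_u w_v (1 - ŷ(u) - ŷ(v))`, with the convention `ŷ(⊥) = 1`: outside the diagonal, row `r ∈ Y` has
one entry of absolute value `M^(-1/2)` and fewer than `M` entries of absolute value at most `3 / M`.
Its squared length is at most `10 / M`, and the Frobenius norm of the corner is controlled by adding
these bounds over the rows in `S`.
-/

section TransitionCapacity

open Matrix
open scoped ComplexOrder MatrixOrder Matrix.Norms.L2Operator

section StarProjections
variable {A : Type*} [NonUnitalCStarAlgebra A] [PartialOrder A] [StarOrderedRing A]

theorem sq_norm_mul_le_sum_of_le_sum {κ : Type*} {s : Finset κ} {p : A} {q : κ → A}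
    (hp : IsStarProjection p) (hq : ∀ i ∈ s, IsStarProjection (q i)) (hpq : p ≤ ∑ i ∈ s, q i)
    (a : A) : ‖p * a‖ ^ 2 ≤ ∑ i ∈ s, ‖q i * a‖ ^ 2 := by
  have gram {e : A} (he : IsStarProjection e) : star (e * a) * (e * a) = star a * e * a := by
    rw [star_mul, he.isSelfAdjoint.star_eq, mul_assoc, ← mul_assoc e, he.isIdempotentElem.eq,
      mul_assoc]
  calc ‖p * a‖ ^ 2 = ‖star a * p * a‖ := by
        rw [← gram hp, CStarRing.norm_star_mul_self, sq]
    _ ≤ ‖star a * (∑ i ∈ s, q i) * a‖ :=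
        CStarAlgebra.norm_le_norm_of_nonneg_of_le
          (star_left_conjugate_nonneg hp.nonneg a) (star_left_conjugate_le_conjugate hpq a)
    _ = ‖∑ i ∈ s, star (q i * a) * (q i * a)‖ := by
        rw [Finset.mul_sum, Finset.sum_mul, Finset.sum_congr rfl fun i hi => gram (hq i hi)]
    _ ≤ ∑ i ∈ s, ‖q i * a‖ ^ 2 :=
        norm_sum_le_of_le s fun i _ => by rw [CStarRing.norm_star_mul_self, sq]

theorem norm_mul_unitary_mul_unitary_mul_le {B : Type*} [NormedRing B] [StarRing B] [CStarRing B]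
    {p q L R e : B} (hpL : Commute p L) (hqR : Commute q R) (hL : L ∈ unitary B)
    (hR : R ∈ unitary B) (hqe : q * e = e) (he : ‖e‖ ≤ 1) (U : B) :
    ‖p * (L * U * R * e)‖ ≤ ‖p * U * q‖ :=
  calc ‖p * (L * U * R * e)‖ = ‖p * L * U * R * (q * e)‖ := by rw [hqe]; simp only [mul_assoc]
    _ = ‖L * p * U * (R * q) * e‖ := by rw [hpL.eq]; simp only [mul_assoc]
    _ = ‖L * (p * U * q) * R * e‖ := by rw [← hqR.eq]; simp only [mul_assoc]
    _ ≤ ‖L * (p * U * q) * R‖ * ‖e‖ := norm_mul_le _ _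
    _ ≤ ‖L * (p * U * q) * R‖ := mul_le_of_le_one_right (norm_nonneg _) he
    _ = ‖p * U * q‖ := by
        rw [CStarRing.norm_mul_mem_unitary _ hR, CStarRing.norm_mem_unitary_mul _ hL]

end StarProjections

section Matrices

variable {ι : Type*} [Fintype ι] [DecidableEq ι]

theorem reflection_conj_diagonal_apply_of_ne {R : Type*} [CommRing R] (w d : ι → R) {i j : ι}
    (hij : i ≠ j) :
    ((1 - vecMulVec w w) * diagonal d * (1 - vecMulVec w w)) i j =
      w i * w j * (∑ l, w l ^ 2 * d l - d i - d j) := by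
  have hsum : (w ᵥ* diagonal d) ⬝ᵥ w = ∑ l, w l ^ 2 * d l :=
    Finset.sum_congr rfl fun l _ => by rw [vecMul_diagonal]; ring
  rw [sub_mul, one_mul, mul_sub, mul_one, sub_mul, vecMulVec_mul, vecMulVec_mul_vecMulVec, hsum,
    mul_vecMulVec]
  simp only [Matrix.sub_apply, diagonal_apply_ne _ hij, vecMulVec_apply, vecMul_diagonal,
    mulVec_diagonal, Pi.smul_apply, smul_eq_mul]
  ring

theorem reflection_mul_self {R : Type*} [CommRing R] {w : ι → R} (hw : w ⬝ᵥ w = 2) :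
    (1 - vecMulVec w w) * (1 - vecMulVec w w) = 1 := by
  rw [sub_mul, one_mul, mul_sub, mul_one, vecMulVec_mul_vecMulVec, hw, two_smul, vecMulVec_add]
  abel

theorem sq_l2_opNorm_le_sum_sq_norm {𝕜 m n : Type*} [RCLike 𝕜] [Fintype m] [Fintype n]
    [DecidableEq n] (A : Matrix m n 𝕜) :
    ‖A‖ ^ 2 ≤ ∑ i, ∑ j, ‖A i j‖ ^ 2 := by
  have h0 : 0 ≤ ∑ i, ∑ j, ‖A i j‖ ^ 2 := by positivity
  rw [← Real.le_sqrt (norm_nonneg _) h0]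
  refine ContinuousLinearMap.opNorm_le_bound _ (Real.sqrt_nonneg _) fun ψ => ?_
  rw [← sq_le_sq₀ (norm_nonneg _) (by positivity), mul_pow, Real.sq_sqrt h0,
    EuclideanSpace.norm_sq_eq, EuclideanSpace.norm_sq_eq, Finset.sum_mul]
  refine Finset.sum_le_sum fun i _ => ?_
  calc ‖∑ j, A i j * ψ j‖ ^ 2 ≤ (∑ j, ‖A i j‖ * ‖ψ j‖) ^ 2 := by
        gcongr
        exact (norm_sum_le _ _).trans_eq (by simp only [norm_mul])
    _ ≤ (∑ j, ‖A i j‖ ^ 2) * ∑ j, ‖ψ j‖ ^ 2 := Finset.sum_mul_sq_le_sq_mul_sq _ _ _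

theorem norm_toOp (A : Matrix ι ι ℂ) : ‖toOp A‖ = ‖A‖ := rfl

theorem toOp_mul (A B : Matrix ι ι ℂ) : toOp (A * B) = (toOp A).comp (toOp B) := by
  ext ψ : 1
  simp [toOp, toLpLin_apply]

end Matrices

section Projections

variable {ι : Type*} [DecidableEq ι]

theorem projMat_eq_diagonal (P : Set ι) : projMat P = diagonal (P.indicator 1) := by
  classical
  ext i j
  simp [projMat, diagonal_apply, Set.indicator_apply, ite_and]

theorem projMat_empty : projMat (∅ : Set ι) = 0 := by
  simp [projMat_eq_diagonal]

theorem projMat_le_sum_projMat {κ : Type*} [Fintype κ] {P : Set ι} {Q : κ → Set ι}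
    (hPQ : P ⊆ ⋃ a, Q a) : projMat P ≤ ∑ a, projMat (Q a) := by
  have hsum : ∑ a, projMat (Q a) = diagonal (∑ a, (Q a).indicator 1) := by
    simp only [projMat_eq_diagonal]
    exact (map_sum (diagonalAddMonoidHom ι ℂ) _ _).symm
  rw [le_iff, hsum, projMat_eq_diagonal, diagonal_sub, posSemidef_diagonal_iff]
  have hind (a : κ) : (0 : ι → ℂ) ≤ (Q a).indicator 1 :=
    fun i => Set.indicator_nonneg (fun _ _ => zero_le_one) i
  refine fun i => sub_nonneg.2 (Set.indicator_le' (fun i hi => ?_) (fun i _ => ?_) i)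
  · obtain ⟨a, ha⟩ := Set.mem_iUnion.1 (hPQ hi)
    calc (1 : ℂ) = (Q a).indicator 1 i := by rw [Set.indicator_of_mem ha, Pi.one_apply]
      _ ≤ (∑ a, (Q a).indicator 1) i :=
          Finset.single_le_sum (fun a _ => hind a) (Finset.mem_univ a) i
  · exact Finset.sum_nonneg (fun a _ => hind a) i

variable [Fintype ι]

theorem projMat_mul_projMat (P Q : Set ι) : projMat P * projMat Q = projMat (P ∩ Q) := by
  rw [projMat_eq_diagonal, projMat_eq_diagonal, projMat_eq_diagonal, Set.inter_indicator_one]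
  exact diagonal_mul_diagonal _ _

theorem isStarProjection_projMat (P : Set ι) : IsStarProjection (projMat P) where
  isIdempotentElem := by rw [IsIdempotentElem, projMat_mul_projMat, Set.inter_self]
  isSelfAdjoint := by
    classical
    rw [IsSelfAdjoint, projMat_eq_diagonal, star_eq_conjTranspose, diagonal_conjTranspose]
    congr 1
    ext1 i
    simp [Set.indicator_apply, apply_ite]

theorem sq_norm_projMat_mul_mul_projMat_le (P Q : Finset ι) (A : Matrix ι ι ℂ) :
    ‖projMat P * A * projMat Q‖ ^ 2 ≤ ∑ i ∈ P, ∑ j ∈ Q, ‖A i j‖ ^ 2 := by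
  refine (sq_l2_opNorm_le_sum_sq_norm _).trans_eq ?_
  simp only [projMat_eq_diagonal, mul_diagonal, diagonal_mul, Set.indicator_apply,
    SetLike.mem_coe, Pi.one_apply, ite_mul, one_mul, zero_mul, mul_ite, mul_one, mul_zero]
  simp [apply_ite, Finset.sum_ite_mem]

end Projections

section Registers

variable {X Y : Type*} [DecidableEq X]

/-- The `1`-local property of the functions whose value at `a` lies in `S`. -/
def localProperty {Z : Type*} (a : X) (S : Set Z) : Set (X → Z) := {D | D a ∈ S}

variable [Fintype X] [DecidableEq Y]

theorem liftMat_eq_submatrix_blockDiagonal (a : X) (m : Matrix (Option Y) (Option Y) ℂ) :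
    liftMat a m = (blockDiagonal fun _ => m).submatrix (Equiv.funSplitAt a (Option Y))
      (Equiv.funSplitAt a (Option Y)) := by
  ext D D'
  simp [liftMat, blockDiagonal_apply, funext_iff]

theorem liftMat_diagonal (a : X) (d : Option Y → ℂ) :
    liftMat a (diagonal d) = diagonal fun D : X → Option Y => d (D a) := by
  rw [liftMat_eq_submatrix_blockDiagonal, blockDiagonal_diagonal, submatrix_diagonal_equiv]
  rfl

theorem liftMat_projMat (a : X) (S : Set (Option Y)) :
    liftMat a (projMat S) = projMat (localProperty a S) := by
  rw [projMat_eq_diagonal, liftMat_diagonal, projMat_eq_diagonal]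
  rfl

variable [Fintype Y]

/-- The action of operators on `ℂ^Ȳ` at register `a` of `ℂ[DB]`, as a star algebra homomorphism. -/
noncomputable def liftHom (a : X) :
    Matrix (Option Y) (Option Y) ℂ →⋆ₐ[ℂ] Matrix (X → Option Y) (X → Option Y) ℂ where
  toFun := liftMat a
  map_one' := by rw [← diagonal_one, liftMat_diagonal, ← diagonal_one]
  map_mul' m n := by
    simp only [liftMat_eq_submatrix_blockDiagonal, blockDiagonal_mul, submatrix_mul_equiv]
  map_zero' := by rw [← diagonal_zero, liftMat_diagonal, ← diagonal_zero]
  map_add' m n := by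
    ext D D'
    simp [liftMat, ite_add_ite]
  commutes' z := by
    simp only [algebraMap_eq_diagonal, liftMat_diagonal]
    rfl
  map_star' m := by
    simp only [liftMat_eq_submatrix_blockDiagonal, star_eq_conjTranspose, conjTranspose_submatrix,
      blockDiagonal_conjTranspose]

theorem liftHom_apply (a : X) (m : Matrix (Option Y) (Option Y) ℂ) : liftHom a m = liftMat a m :=
  rfl

theorem commute_projMat_localProperty_liftMat {a b : X} (hab : a ≠ b) (S : Set (Option Y))
    (m : Matrix (Option Y) (Option Y) ℂ) :
    Commute (projMat (localProperty a S)) (liftMat b m) := by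
  classical
  ext D D'
  rw [projMat_eq_diagonal, diagonal_mul, mul_diagonal]
  by_cases hD : ∀ e, e ≠ b → D e = D' e
  · simp [localProperty, Set.indicator_apply, hD a hab]
  · simp [liftMat, hD]

end Registers

section CompressedOracle

variable {Y : Type*} [Fintype Y]

/-- The vector `e_⊥ - M^(-1/2) ∑ y, e_y`, of squared length `2`, whose orthogonal complement is the
mirror of the reflection `Comp`. -/
noncomputable def compVec (Y : Type*) [Fintype Y] (u : Option Y) : ℂ :=
  u.elim 1 fun _ => -((√(Fintype.card Y : ℝ) : ℝ) : ℂ)⁻¹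

theorem sq_compVec_some (r : Y) : compVec Y (some r) ^ 2 = (Fintype.card Y : ℂ)⁻¹ := by
  simp [compVec, inv_pow, ← Complex.ofReal_pow]

theorem sq_norm_compVec_some (r : Y) : ‖compVec Y (some r)‖ ^ 2 = (Fintype.card Y : ℝ)⁻¹ := by
  rw [← norm_pow, sq_compVec_some, norm_inv, Complex.norm_natCast]

theorem compVec_dotProduct_self [Nonempty Y] : compVec Y ⬝ᵥ compVec Y = 2 := by
  rw [dotProduct, Fintype.sum_option]
  simp only [← sq, sq_compVec_some, Finset.sum_const, Finset.card_univ, nsmul_eq_mul]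
  rw [show compVec Y none = 1 from rfl, one_pow,
    mul_inv_cancel₀ (Nat.cast_ne_zero.2 Fintype.card_ne_zero), one_add_one_eq_two]

variable [DecidableEq Y]

theorem compMat_eq_reflection : compMat Y = 1 - vecMulVec (compVec Y) (compVec Y) := by
  ext u v
  rcases u with _ | r <;> rcases v with _ | s
  · simp [compMat, compVec, vecMulVec_apply]
  · simp [compMat, compVec, vecMulVec_apply]
  · simp [compMat, compVec, vecMulVec_apply]
  · have h : compVec Y (some r) * compVec Y (some s) = (Fintype.card Y : ℂ)⁻¹ := by
      rw [← sq_compVec_some r, sq]; rfl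
    simp [compMat, vecMulVec_apply, h, one_apply]

theorem compMat_mem_unitary [Nonempty Y] :
    compMat Y ∈ unitary (Matrix (Option Y) (Option Y) ℂ) := by
  have hstar : star (compVec Y) = compVec Y := by
    ext1 u; rcases u with _ | r <;> simp [compVec]
  have hself : star (compMat Y) = compMat Y := by
    rw [compMat_eq_reflection, star_sub, star_one, star_eq_conjTranspose,
      conjTranspose_vecMulVec, hstar]
  have hsq : compMat Y * compMat Y = 1 := by
    rw [compMat_eq_reflection, reflection_mul_self compVec_dotProduct_self]
  exact Unitary.mem_iff.2 ⟨by rw [hself, hsq], by rw [hself, hsq]⟩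

variable [AddCommGroup Y]

theorem oMat_mem_unitary (c : AddChar Y ℂ) :
    oMat c ∈ unitary (Matrix (Option Y) (Option Y) ℂ) := by
  have hphase (u : Option Y) : ‖u.elim 1 c‖ = 1 := by
    rcases u with _ | r
    · exact norm_one
    · exact c.norm_apply r
  rw [mem_unitaryGroup_iff, oMat, star_eq_conjTranspose, diagonal_conjTranspose,
    diagonal_mul_diagonal, ← diagonal_one]
  congr 1
  ext1 u
  rw [Pi.star_apply, RCLike.star_def, RCLike.mul_conj, hphase]
  simp

theorem cOMat_mem_unitary (c : AddChar Y ℂ) :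
    cOMat c ∈ unitary (Matrix (Option Y) (Option Y) ℂ) :=
  mul_mem (mul_mem compMat_mem_unitary (oMat_mem_unitary c)) compMat_mem_unitary

theorem cOMat_zero : cOMat (0 : AddChar Y ℂ) = 1 := by
  have hoMat : oMat (0 : AddChar Y ℂ) = 1 := by
    rw [oMat, ← diagonal_one]
    congr 1
    ext1 u
    rcases u with _ | r <;> rfl
  rw [cOMat, hoMat, mul_one, compMat_eq_reflection, reflection_mul_self compVec_dotProduct_self]

theorem cOMat_apply_of_ne {c : AddChar Y ℂ} (hc : c ≠ 0) {u v : Option Y} (huv : u ≠ v) :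
    cOMat c u v = compVec Y u * compVec Y v * (1 - u.elim 1 c - v.elim 1 c) := by
  rw [cOMat, compMat_eq_reflection, oMat, reflection_conj_diagonal_apply_of_ne _ _ huv,
    Fintype.sum_option]
  simp only [sq_compVec_some, Option.elim, ← Finset.mul_sum, AddChar.sum_eq_zero_iff_ne_zero.2 hc]
  simp [compVec]

theorem sq_norm_cOMat_some_none_le (c : AddChar Y ℂ) (r : Y) :
    ‖cOMat c (some r) none‖ ^ 2 ≤ (Fintype.card Y : ℝ)⁻¹ := by
  rcases eq_or_ne c 0 with rfl | hc
  · simp [cOMat_zero]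
  · refine le_of_eq ?_
    rw [cOMat_apply_of_ne hc (Option.some_ne_none r)]
    simp [compVec, AddChar.norm_apply]

theorem sq_norm_cOMat_some_some_le (c : AddChar Y ℂ) {r s : Y} (hrs : r ≠ s) :
    ‖cOMat c (some r) (some s)‖ ^ 2 ≤ 9 * (Fintype.card Y : ℝ)⁻¹ ^ 2 := by
  rcases eq_or_ne c 0 with rfl | hc
  · rw [cOMat_zero, one_apply_ne (Option.some_injective Y |>.ne hrs), norm_zero,
      zero_pow two_ne_zero]
    positivity
  have hphase : ‖1 - c r - c s‖ ≤ 3 :=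
    calc ‖1 - c r - c s‖ ≤ ‖(1 : ℂ)‖ + ‖c r‖ + ‖c s‖ :=
          (norm_sub_le _ _).trans (by gcongr; exact norm_sub_le _ _)
      _ = 3 := by rw [norm_one, c.norm_apply, c.norm_apply]; norm_num
  rw [cOMat_apply_of_ne hc (Option.some_injective Y |>.ne hrs), norm_mul, norm_mul, mul_pow,
    mul_pow, sq_norm_compVec_some, sq_norm_compVec_some]
  calc _ ≤ (Fintype.card Y : ℝ)⁻¹ * (Fintype.card Y : ℝ)⁻¹ * 3 ^ 2 := by gcongr; exact hphase
    _ = _ := by ring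

theorem sum_compl_sq_norm_cOMat_some_le (c : AddChar Y ℂ) (r : Y) :
    ∑ v ∈ {some r}ᶜ, ‖cOMat c (some r) v‖ ^ 2 ≤ 10 * (Fintype.card Y : ℝ)⁻¹ := by
  set M : ℝ := (Fintype.card Y : ℝ) with hcard
  have hM : M ≠ 0 := Nat.cast_ne_zero.2 Fintype.card_ne_zero
  have hrow (s : Y) : (if s = r then 0 else ‖cOMat c (some r) (some s)‖ ^ 2) ≤ 9 * M⁻¹ ^ 2 := by
    split_ifs with hs
    · positivity
    · exact sq_norm_cOMat_some_some_le c (Ne.symm hs)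
  calc ∑ v ∈ {some r}ᶜ, ‖cOMat c (some r) v‖ ^ 2
      = ‖cOMat c (some r) none‖ ^ 2 +
          ∑ s, if s = r then 0 else ‖cOMat c (some r) (some s)‖ ^ 2 := by
        rw [Finset.compl_singleton, ← Finset.filter_ne', Finset.sum_filter, Fintype.sum_option]
        simp [ite_not]
    _ ≤ M⁻¹ + ∑ _s : Y, 9 * M⁻¹ ^ 2 :=
        add_le_add (sq_norm_cOMat_some_none_le c r) (Finset.sum_le_sum fun s _ => hrow s)
    _ = 10 * M⁻¹ := by
        rw [Finset.sum_const, Finset.card_univ, nsmul_eq_mul, ← hcard]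
        field_simp
        norm_num

end CompressedOracle

section LocalDensity

variable {Y : Type*} [Fintype Y]

open Classical in
/-- The quantity `ρ` attached to a set `S ⊆ Ȳ`: the proportion of elements of `Y` in `S`, except
that it vanishes for `S = Ȳ`. -/
noncomputable def localDensity (S : Set (Option Y)) : ℝ :=
  if S = ∅ ∨ S = Set.univ then 0 else ({y : Y | some y ∈ S}.ncard : ℝ) / Fintype.card Y

theorem localDensity_univ : localDensity (Set.univ : Set (Option Y)) = 0 := by
  simp [localDensity]

theorem localDensity_of_none_notMem {S : Set (Option Y)} (hS : none ∉ S) :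
    localDensity S = S.ncard / Fintype.card Y := by
  have himage : some '' {y : Y | some y ∈ S} = S :=
    Set.image_preimage_eq_of_subset fun u hu => by
      rcases u with _ | r
      · exact absurd hu hS
      · exact ⟨r, rfl⟩
  have huniv : S ≠ Set.univ := fun h => hS (h ▸ Set.mem_univ none)
  have hncard : {y : Y | some y ∈ S}.ncard = S.ncard := by
    rw [← Set.ncard_image_of_injective _ (Option.some_injective Y), himage]
  rcases eq_or_ne S ∅ with rfl | hempty
  · simp [localDensity]
  · rw [localDensity, if_neg (not_or.2 ⟨hempty, huniv⟩), hncard]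

variable [DecidableEq Y] [AddCommGroup Y]

theorem sq_norm_projMat_mul_cOMat_mul_projMat_compl_le (c : AddChar Y ℂ) {S : Set (Option Y)}
    (hS : none ∈ S → S = Set.univ) :
    ‖projMat S * cOMat c * projMat Sᶜ‖ ^ 2 ≤ 10 * localDensity S := by
  classical
  by_cases hnone : none ∈ S
  · rw [hS hnone, Set.compl_univ, projMat_empty, mul_zero, norm_zero, localDensity_univ]
    norm_num
  have hrow : ∀ u ∈ S.toFinset, ∑ v ∈ Sᶜ.toFinset, ‖cOMat c u v‖ ^ 2 ≤
      10 * (Fintype.card Y : ℝ)⁻¹ := by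
    intro u hu
    rw [Set.mem_toFinset] at hu
    obtain ⟨r, rfl⟩ := Option.ne_none_iff_exists'.1 (ne_of_mem_of_not_mem hu hnone)
    have hsub : Sᶜ.toFinset ⊆ {some r}ᶜ := fun v hv => by
      rw [Finset.mem_compl, Finset.mem_singleton]
      exact (ne_of_mem_of_not_mem hu (Set.mem_toFinset.1 hv)).symm
    exact (Finset.sum_le_sum_of_subset_of_nonneg hsub fun _ _ _ => sq_nonneg _).trans
      (sum_compl_sq_norm_cOMat_some_le c r)
  calc ‖projMat S * cOMat c * projMat Sᶜ‖ ^ 2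
      ≤ ∑ u ∈ S.toFinset, ∑ v ∈ Sᶜ.toFinset, ‖cOMat c u v‖ ^ 2 := by
        simpa only [Set.coe_toFinset] using
          sq_norm_projMat_mul_mul_projMat_le S.toFinset Sᶜ.toFinset (cOMat c)
    _ ≤ S.toFinset.card • (10 * (Fintype.card Y : ℝ)⁻¹) := Finset.sum_le_card_nsmul _ _ _ hrow
    _ = 10 * localDensity S := by
        rw [localDensity_of_none_notMem hnone, Set.ncard_eq_toFinset_card', nsmul_eq_mul]
        ring

end LocalDensity

section ParallelQueries

variable {X Y : Type*} [Fintype X] [DecidableEq X] [Fintype Y] [DecidableEq Y] [AddCommGroup Y]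
  {k : ℕ} {x : Fin k → X}

theorem exists_cOparMat_eq_mul_mul (hx : Function.Injective x) (c : Fin k → AddChar Y ℂ)
    (i : Fin k) :
    ∃ L ∈ unitary (Matrix (X → Option Y) (X → Option Y) ℂ),
      ∃ R ∈ unitary (Matrix (X → Option Y) (X → Option Y) ℂ),
        (∀ S, Commute (projMat (localProperty (x i) S)) L) ∧
        (∀ S, Commute (projMat (localProperty (x i) S)) R) ∧
        cOparMat x c = L * liftMat (x i) (cOMat (c i)) * R := by
  let query (j : Fin k) := liftMat (x j) (cOMat (c j))
  have hunitary (l : List (Fin k)) : (l.map query).prod ∈ unitary _ := by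
    refine list_prod_mem fun U hU => ?_
    obtain ⟨j, -, rfl⟩ := List.mem_map.1 hU
    exact Unitary.map_mem (liftHom (x j)) (cOMat_mem_unitary (c j))
  have hcomm {l : List (Fin k)} (hil : i ∉ l) (S : Set (Option Y)) :
      Commute (projMat (localProperty (x i) S)) (l.map query).prod := by
    refine Commute.list_prod_right _ _ fun U hU => ?_
    obtain ⟨j, hj, rfl⟩ := List.mem_map.1 hU
    exact commute_projMat_localProperty_liftMat (hx.ne (ne_of_mem_of_not_mem hj hil).symm) S _
  obtain ⟨s, t, hst⟩ := List.append_of_mem (List.mem_finRange i)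
  have hnodup : i ∉ s ++ t := by
    have := List.nodup_finRange k
    rw [hst, List.nodup_middle, List.nodup_cons] at this
    exact this.1
  rw [List.mem_append, not_or] at hnodup
  refine ⟨_, hunitary s, _, hunitary t, hcomm hnodup.1, hcomm hnodup.2, ?_⟩
  rw [cOparMat, List.ofFn_eq_map, hst, List.map_append, List.prod_append, List.map_cons,
    List.prod_cons, mul_assoc]

theorem sq_norm_projMat_localProperty_mul_cOparMat_mul_projMat_le (hx : Function.Injective x)
    (c : Fin k → AddChar Y ℂ) (i : Fin k) {S : Set (Option Y)} (hS : none ∈ S → S = Set.univ)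
    {P : Set (X → Option Y)} (hP : P ⊆ localProperty (x i) Sᶜ) :
    ‖projMat (localProperty (x i) S) * (cOparMat x c * projMat P)‖ ^ 2 ≤
      10 * localDensity S := by
  obtain ⟨L, hL, R, hR, hcommL, hcommR, hprod⟩ := exists_cOparMat_eq_mul_mul hx c i
  have habsorb : projMat (localProperty (x i) Sᶜ) * projMat P = projMat P := by
    rw [projMat_mul_projMat, Set.inter_eq_right.2 hP]
  have hcorner : projMat (localProperty (x i) S) * liftMat (x i) (cOMat (c i)) *
      projMat (localProperty (x i) Sᶜ) =
        liftHom (x i) (projMat S * cOMat (c i) * projMat Sᶜ) := by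
    rw [map_mul, map_mul, liftHom_apply, liftHom_apply, liftHom_apply, liftMat_projMat,
      liftMat_projMat]
  refine le_trans ?_ (sq_norm_projMat_mul_cOMat_mul_projMat_compl_le (c i) hS)
  gcongr
  calc ‖projMat (localProperty (x i) S) * (cOparMat x c * projMat P)‖
      ≤ ‖liftHom (x i) (projMat S * cOMat (c i) * projMat Sᶜ)‖ := by
        rw [hprod, ← hcorner]
        exact norm_mul_unitary_mul_unitary_mul_le (hcommL S) (hcommR Sᶜ) hL hR habsorb
          (isStarProjection_projMat P).norm_le _
    _ ≤ ‖projMat S * cOMat (c i) * projMat Sᶜ‖ := NonUnitalStarAlgHom.norm_apply_le _ _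

theorem norm_toOp_transition_le (hx : Function.Injective x) (c : Fin k → AddChar Y ℂ)
    {S : Fin k → Set (Option Y)} (hS : ∀ i, none ∈ S i → S i = Set.univ)
    {P P' : Set (X → Option Y)} (hP' : P' ⊆ ⋃ i, localProperty (x i) (S i))
    (hP : ∀ i, P ⊆ localProperty (x i) (S i)ᶜ) :
    ‖(toOp (projMat P')).comp ((toOp (cOparMat x c)).comp (toOp (projMat P)))‖ ≤
      √(10 * ∑ i, localDensity (S i)) := by
  rw [← toOp_mul, ← toOp_mul, norm_toOp]
  refine Real.le_sqrt_of_sq_le ?_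
  calc ‖projMat P' * (cOparMat x c * projMat P)‖ ^ 2
      ≤ ∑ i, ‖projMat (localProperty (x i) (S i)) * (cOparMat x c * projMat P)‖ ^ 2 :=
        sq_norm_mul_le_sum_of_le_sum (isStarProjection_projMat P')
          (fun i _ => isStarProjection_projMat _) (projMat_le_sum_projMat hP') _
    _ ≤ ∑ i, 10 * localDensity (S i) := Finset.sum_le_sum fun i _ =>
        sq_norm_projMat_localProperty_mul_cOparMat_mul_projMat_le hx c i (hS i) (hP i)
    _ = 10 * ∑ i, localDensity (S i) := (Finset.mul_sum _ _ _).symm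

end ParallelQueries

theorem dbUpdate_comp_eq_self {X Y : Type*} {k : ℕ} {D D' : X → Option Y} {x : Fin k → X}
    (hD' : D' ∈ agreeOff D x) : dbUpdate D x (D' ∘ x) = D' := by
  ext1 a
  rw [dbUpdate]
  split_ifs with ha
  · exact congrArg D' ha.choose_spec
  · exact (hD' a fun i hi => ha ⟨i, hi⟩).symm

end TransitionCapacity

open Classical in
theorem stmt_8 {X Y : Type*} [Fintype X] [DecidableEq X] [Nonempty X]
    [Fintype Y] [DecidableEq Y] [AddCommGroup Y]
    (k : ℕ) (hk : 1 ≤ k) (P P' : Set (X → Option Y))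
    -- the 1-local properties `L_i^{x,D}`, given as subsets `S x D i ⊆ Ȳ`
    (S : (Fin k → X) → (X → Option Y) → Fin k → Set (Option Y))
    -- if `⊥ ∈ S_i^{x,D}` then `S_i^{x,D} = Ȳ`
    (hbot : ∀ (x : Fin k → X) (D : X → Option Y) (i : Fin k), Function.Injective x →
      none ∈ S x D i → S x D i = Set.univ)
    -- (i)
    (h1 : ∀ (x : Fin k → X) (D : X → Option Y) (r : Fin k → Option Y),
      Function.Injective x → dbUpdate D x r ∈ P' → ∃ i, r i ∈ S x D i)
    -- (ii)
    (h2 : ∀ (x : Fin k → X) (D : X → Option Y) (r : Fin k → Option Y),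
      Function.Injective x → (∃ i, r i ∈ S x D i) → dbUpdate D x r ∈ P) :
    qtc Pᶜ P' k Set.univ ≤
      sSup {v : ℝ | ∃ (x : Fin k → X) (D : X → Option Y), Function.Injective x ∧
        v = Real.sqrt (10 * ∑ i : Fin k,
          (if S x D i = ∅ ∨ S x D i = Set.univ then (0 : ℝ)
           else ({y : Y | some y ∈ S x D i}.ncard : ℝ) / Fintype.card Y))} := by
  refine Real.sSup_le ?_ (Real.sSup_nonneg ?_)
  · rintro v ⟨x, c, D, hx, -, rfl⟩
    have hattained : BddAbove {v : ℝ | ∃ (x : Fin k → X) (D : X → Option Y),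
        Function.Injective x ∧ v = √(10 * ∑ i, localDensity (S x D i))} := by
      refine ((Set.finite_range fun xD : (Fin k → X) × (X → Option Y) =>
        √(10 * ∑ i, localDensity (S xD.1 xD.2 i))).subset ?_).bddAbove
      rintro v ⟨x, D, -, rfl⟩
      exact ⟨(x, D), rfl⟩
    refine (norm_toOp_transition_le hx c (fun i => hbot x D i hx) ?_ fun i => ?_).trans
      (le_csSup hattained ⟨x, D, hx, rfl⟩)
    · rintro D' ⟨hD'P', hD'⟩
      exact Set.mem_iUnion.2 (h1 x D (D' ∘ x) hx (by rwa [dbUpdate_comp_eq_self hD']))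
    · rintro D' ⟨hD'P, hD'⟩ hi
      exact hD'P (dbUpdate_comp_eq_self hD' ▸ h2 x D (D' ∘ x) hx ⟨i, hi⟩)
  · rintro v ⟨x, D, -, rfl⟩
    exact Real.sqrt_nonneg _
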